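/- arXiv:2509.04200 — 3 statements merged into one kernel-verified Lean document; each statement's English description precedes it below -/
import Mathlib

section
/- Let T and R be rooted trees and let X be the union of the vertex sets of T and R, so that 𝒮(T) and 𝒮(R) are both subsemigroups of I_X. If T contains a quasi-subtree Q such that Q and R are isomorphic as rooted trees, then 𝒮(R) ≼ 𝒮(T). -/
open Set Cardinal

universe u

/-- A chart on `X` (an element of the symmetric inverse monoid `I_X`): a partial
bijection between subsets of `X`, encoded as a functional, injective relation,
i.e. a set of pairs. -/
structure Chart (X : Type u) : Type u where
  rel : Set (X × X)
  functional : ∀ ⦃x y y'⦄, (x, y) ∈ rel → (x, y') ∈ rel → y = y'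
  injective : ∀ ⦃x x' y⦄, (x, y) ∈ rel → (x', y) ∈ rel → x = x'

namespace Chart

variable {X : Type u}

/-- Composition of charts: compose wherever possible. -/
instance : Mul (Chart X) :=
  ⟨fun f g =>
    { rel := {p | ∃ y, (p.1, y) ∈ f.rel ∧ (y, p.2) ∈ g.rel}
      functional := by
        rintro x y y' ⟨z, hz1, hz2⟩ ⟨w, hw1, hw2⟩
        obtain rfl : z = w := f.functional hz1 hw1
        exact g.functional hz2 hw2
      injective := by
        rintro x x' y ⟨z, hz1, hz2⟩ ⟨w, hw1, hw2⟩
        obtain rfl : z = w := g.injective hz2 hw2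
        exact f.injective hz1 hw1 }⟩

/-- The inverse chart. -/
instance : Inv (Chart X) :=
  ⟨fun f =>
    { rel := {p | (p.2, p.1) ∈ f.rel}
      functional := fun _ _ _ h h' => f.injective h h'
      injective := fun _ _ _ h h' => f.functional h h' }⟩

/-- The domain of a chart. -/
def dom (f : Chart X) : Set X := {x | ∃ y, (x, y) ∈ f.rel}

/-- The range (image) of a chart. -/
def ran (f : Chart X) : Set X := {y | ∃ x, (x, y) ∈ f.rel}

end Chart

/-- Membership in the subsemigroup of `I_X` generated by a set of charts. -/
inductive InGen {X : Type u} (S : Set (Chart X)) : Chart X → Prop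
  | base {f : Chart X} : f ∈ S → InGen S f
  | mul {f g : Chart X} : InGen S f → InGen S g → InGen S (f * g)

/-- The subsemigroup of `I_X` generated by a set of charts. -/
def Sgen {X : Type u} (S : Set (Chart X)) : Set (Chart X) := {f | InGen S f}

/-- The Bergman–Shelah preorder `S ≼ T` on subsets of `I_X`: there is a countable
subset `U ⊆ I_X` with `S` contained in the subsemigroup generated by `T ∪ U`. -/
def BSleq {X : Type u} (S T : Set (Chart X)) : Prop :=
  ∃ U : Set (Chart X), U.Countable ∧ S ⊆ Sgen (T ∪ U)

/-- Bergman–Shelah equivalence `S ≈ T`. -/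
def BSequiv {X : Type u} (S T : Set (Chart X)) : Prop := BSleq S T ∧ BSleq T S

/-- The Bergman–Shelah preorder relative to a cardinal `κ`: `S ≼_κ T` iff there is
`U ⊆ I_X` with `|U| < κ` and `S` contained in the subsemigroup generated by `T ∪ U`. -/
def BSleqC {X : Type u} (κ : Cardinal.{u}) (S T : Set (Chart X)) : Prop :=
  ∃ U : Set (Chart X), #↥U < κ ∧ S ⊆ Sgen (T ∪ U)

/-- Bergman–Shelah equivalence relative to a cardinal `κ`. -/
def BSequivC {X : Type u} (κ : Cardinal.{u}) (S T : Set (Chart X)) : Prop :=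
  BSleqC κ S T ∧ BSleqC κ T S

/-- A chart is a permutation of `X` if it is everywhere defined and surjective. -/
def IsPermChart {X : Type u} (f : Chart X) : Prop :=
  (∀ x : X, ∃ y, (x, y) ∈ f.rel) ∧ ∀ y : X, ∃ x, (x, y) ∈ f.rel

/-- The partwise stabiliser of a family of subsets of `X`: all permutations of `X`
mapping each member of the family onto itself. -/
def PStab {X : Type u} (P : Set (Set X)) : Set (Chart X) :=
  {f | IsPermChart f ∧ ∀ B ∈ P, {y | ∃ x ∈ B, (x, y) ∈ f.rel} = B}

/-- A subset of `I_X` closed under composition. -/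
def IsSubsemigroup {X : Type u} (S : Set (Chart X)) : Prop :=
  ∀ f ∈ S, ∀ g ∈ S, f * g ∈ S

/-- A subsemigroup of `I_X` closed under inversion. -/
def IsInverseSubsemigroup {X : Type u} (S : Set (Chart X)) : Prop :=
  IsSubsemigroup S ∧ ∀ f ∈ S, f⁻¹ ∈ S

/-- The orbit of a point under a set of charts: `{x} ∪ {xf : f ∈ M, x ∈ dom f}`. -/
def ChartOrbit {X : Type u} (M : Set (Chart X)) (x : X) : Set X :=
  insert x {y | ∃ f ∈ M, (x, y) ∈ f.rel}

/-- The cone of a point under a set of charts: `{xs : s ∈ S, x ∈ dom s}`. -/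
def ChartCone {X : Type u} (S : Set (Chart X)) (x : X) : Set X :=
  {y | ∃ f ∈ S, (x, y) ∈ f.rel}

/-- The semilattice of idempotents of `I_X`: the partial identity charts. -/
def EX (X : Type u) : Set (Chart X) := {f | ∀ x y : X, (x, y) ∈ f.rel → y = x}

/-- A `κ`-uniform partition: every part has cardinality `κ`. -/
def IsUniformPartition {X : Type u} (κ : Cardinal.{u}) (P : Set (Set X)) : Prop :=
  Setoid.IsPartition P ∧ ∀ B ∈ P, #↥B = κ

/-- A `κ`-unbounded partition: all parts have cardinality `< κ` but no cardinal
`c < κ` bounds the cardinalities of all parts. -/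
def IsUnboundedPartition {X : Type u} (κ : Cardinal.{u}) (P : Set (Set X)) : Prop :=
  Setoid.IsPartition P ∧ (∀ B ∈ P, #↥B < κ) ∧ ¬∃ c < κ, ∀ B ∈ P, #↥B ≤ c

/-- A `κ`-bounded partition: some cardinal `c < κ` bounds the cardinalities of
all parts. -/
def IsBoundedPartition {X : Type u} (κ : Cardinal.{u}) (P : Set (Set X)) : Prop :=
  Setoid.IsPartition P ∧ ∃ c < κ, ∀ B ∈ P, #↥B ≤ c

/-- A rooted tree on (a subset of) `X`, encoded via its parent function: every
vertex reaches the root by finitely many applications of `par`. -/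
structure RTree (X : Type u) : Type u where
  verts : Set X
  root : X
  root_mem : root ∈ verts
  par : X → X
  par_mem : ∀ x ∈ verts, par x ∈ verts
  par_root : par root = root
  par_reaches : ∀ x ∈ verts, ∃ n : ℕ, par^[n] x = root

namespace RTree

variable {X : Type u}

/-- `T.anc x y` : `x` is an ancestor of `y` (or `x = y`), i.e. `x` lies on the
rooted path to `y`. -/
def anc (T : RTree X) (x y : X) : Prop := ∃ n : ℕ, T.par^[n] y = x

/-- The level of a vertex: its distance to the root. -/
noncomputable def level (T : RTree X) (x : X) : ℕ := sInf {n : ℕ | T.par^[n] x = T.root}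

/-- The children of a vertex. -/
def children (T : RTree X) (x : X) : Set X :=
  {y | y ∈ T.verts ∧ T.par y = x ∧ y ≠ x}

/-- The neighbours of a vertex in the tree (its children together with its
parent, if the vertex is not the root); the degree of the vertex is the size
of this set. -/
def nbhd (T : RTree X) (x : X) : Set X :=
  {y | y ∈ T.verts ∧ ((T.par y = x ∧ y ≠ x) ∨ (T.par x = y ∧ x ≠ y))}

/-- `P` is the vertex set of a (finite or infinite) path of `T` starting at the
root: a nonempty set of vertices closed under taking parents and linearly
ordered by ancestry. -/
def IsRootedPath (T : RTree X) (P : Set X) : Prop :=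
  P.Nonempty ∧ P ⊆ T.verts ∧ (∀ x ∈ P, T.par x ∈ P) ∧
    ∀ x ∈ P, ∀ y ∈ P, T.anc x y ∨ T.anc y x

end RTree

/-- `T'` is a subtree of `T`: a rooted tree on a subset of the vertices of `T`,
with the same root and the same parent relation. -/
def IsSubtree {X : Type u} (T' T : RTree X) : Prop :=
  T'.verts ⊆ T.verts ∧ T'.root = T.root ∧ ∀ x ∈ T'.verts, T'.par x = T.par x

/-- `Q` is a quasi-subtree of `T`: a rooted tree on a subset of the vertices of
`T` preserving the ancestry relation and the levels of `T`. -/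
def IsQuasiSubtree {X : Type u} (Q T : RTree X) : Prop :=
  Q.verts ⊆ T.verts ∧
    (∀ x ∈ Q.verts, ∀ y ∈ Q.verts, (Q.anc x y ↔ T.anc x y)) ∧
    ∀ x ∈ Q.verts, ∀ y ∈ Q.verts, (Q.level x = Q.level y ↔ T.level x = T.level y)

/-- Isomorphism of rooted trees: a bijection of the vertex sets mapping root to
root and commuting with the parent functions. -/
def RTreeIso {X : Type u} {Y : Type u} (T : RTree X) (R : RTree Y) : Prop :=
  ∃ φ : X → Y, Set.BijOn φ T.verts R.verts ∧ φ T.root = R.root ∧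
    ∀ x ∈ T.verts, φ (T.par x) = R.par (φ x)

/-- The semigroup `𝒮(T)` of path-bijections of a rooted tree `T`: charts whose
domain and range are vertex sets of rooted paths and which preserve levels. -/
def pathSg {X : Type u} (T : RTree X) : Set (Chart X) :=
  {f | (∃ P, T.IsRootedPath P ∧ Chart.dom f = P) ∧
    (∃ Q, T.IsRootedPath Q ∧ Chart.ran f = Q) ∧
    ∀ x y : X, (x, y) ∈ f.rel → T.level y = T.level x}

/-! A path-bijection is determined by its domain and image paths, since a rooted path has at most
one vertex on each level; two rooted paths occur as domain and image exactly when they meet the same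
levels. The quasi-subtree and the isomorphism give a map `ψ` of the vertices of `R` into those of
`T` which preserves and reflects ancestry and equality of levels. The ancestors of the image of a
rooted path of `R` form a rooted path of `T`, which contains `ψ x` only for vertices `x` of the
original path. Hence conjugating by the single chart `ψ` turns suitable path-bijections of `T` into
arbitrary path-bijections of `R`, so the countable set `{ψ, ψ⁻¹}` is enough.
-/

namespace Chart

variable {X : Type u}

@[ext]
protected theorem ext {f g : Chart X} (h : f.rel = g.rel) : f = g := by
  cases f
  cases g
  congr

/-- The restriction of a function to a set on which it is injective, as a chart. -/
def ofInjOn (φ : X → X) {s : Set X} (hφ : InjOn φ s) : Chart X where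
  rel := {p | p.1 ∈ s ∧ φ p.1 = p.2}
  functional := by
    rintro x y y' ⟨-, hy⟩ ⟨-, hy'⟩
    exact hy.symm.trans hy'
  injective := by
    rintro x x' y ⟨hx, hxy⟩ ⟨hx', hxy'⟩
    exact hφ hx hx' (hxy.trans hxy'.symm)

end Chart

namespace RTree

variable {X : Type u} {T : RTree X} {P P' A : Set X} {x y z : X}

theorem anc_refl (T : RTree X) (x : X) : T.anc x x := ⟨0, rfl⟩

theorem anc_trans (hxy : T.anc x y) (hyz : T.anc y z) : T.anc x z := by
  obtain ⟨m, rfl⟩ := hxy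
  obtain ⟨n, rfl⟩ := hyz
  exact ⟨m + n, Function.iterate_add_apply _ _ _ _⟩

theorem anc_total_of_anc (hx : T.anc x z) (hy : T.anc y z) : T.anc x y ∨ T.anc y x := by
  obtain ⟨m, rfl⟩ := hx
  obtain ⟨n, rfl⟩ := hy
  rcases le_total m n with h | h
  · exact .inr ⟨n - m, by rw [← Function.iterate_add_apply, Nat.sub_add_cancel h]⟩
  · exact .inl ⟨m - n, by rw [← Function.iterate_add_apply, Nat.sub_add_cancel h]⟩

theorem iterate_par_mem (hx : x ∈ T.verts) (n : ℕ) : T.par^[n] x ∈ T.verts :=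
  MapsTo.iterate T.par_mem n hx

theorem mem_verts_of_anc (h : T.anc x y) (hy : y ∈ T.verts) : x ∈ T.verts := by
  obtain ⟨n, rfl⟩ := h
  exact iterate_par_mem hy n

theorem iterate_par_level (hx : x ∈ T.verts) : T.par^[T.level x] x = T.root :=
  Nat.sInf_mem (T.par_reaches x hx)

theorem iterate_par_eq_root_iff (hx : x ∈ T.verts) {n : ℕ} :
    T.par^[n] x = T.root ↔ T.level x ≤ n := by
  refine ⟨fun h => Nat.sInf_le h, fun h => ?_⟩
  rw [← Nat.sub_add_cancel h, Function.iterate_add_apply, iterate_par_level hx]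
  exact Function.iterate_fixed T.par_root _

theorem level_iterate_par (hx : x ∈ T.verts) (n : ℕ) :
    T.level (T.par^[n] x) = T.level x - n := by
  refine eq_of_forall_ge_iff fun m => ?_
  rw [← iterate_par_eq_root_iff (iterate_par_mem hx n), ← Function.iterate_add_apply,
    iterate_par_eq_root_iff hx, tsub_le_iff_right]

theorem eq_of_anc_of_level_eq (hy : y ∈ T.verts) (h : T.anc x y)
    (hl : T.level x = T.level y) : x = y := by
  obtain ⟨n, rfl⟩ := h
  rw [level_iterate_par hy] at hl
  rcases n.eq_zero_or_pos with rfl | hn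
  · rfl
  · have hroot : y = T.root := (iterate_par_eq_root_iff (n := 0) hy).2 (by omega)
    rw [hroot, Function.iterate_fixed T.par_root]

namespace IsRootedPath

theorem mem_of_anc (hP : T.IsRootedPath P) (h : T.anc x y) (hy : y ∈ P) : x ∈ P := by
  obtain ⟨n, rfl⟩ := h
  exact MapsTo.iterate hP.2.2.1 n hy

theorem injOn_level (hP : T.IsRootedPath P) : InjOn T.level P := by
  intro x hx y hy hl
  rcases hP.2.2.2 x hx y hy with h | h
  · exact eq_of_anc_of_level_eq (hP.2.1 hy) h hl
  · exact (eq_of_anc_of_level_eq (hP.2.1 hx) h hl.symm).symm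

end IsRootedPath

/-- The set of all ancestors of elements of `A`: the vertex set of the smallest subtree with the
same root containing a nonempty set `A` of vertices. -/
def ancClosure (T : RTree X) (A : Set X) : Set X := {x | ∃ a ∈ A, T.anc x a}

theorem subset_ancClosure (T : RTree X) (A : Set X) : A ⊆ T.ancClosure A :=
  fun a ha => ⟨a, ha, T.anc_refl a⟩

theorem isRootedPath_ancClosure (hne : A.Nonempty) (hA : A ⊆ T.verts)
    (htotal : ∀ x ∈ A, ∀ y ∈ A, T.anc x y ∨ T.anc y x) : T.IsRootedPath (T.ancClosure A) := by
  refine ⟨hne.mono (T.subset_ancClosure A), ?_, ?_, ?_⟩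
  · rintro x ⟨a, ha, hxa⟩
    exact mem_verts_of_anc hxa (hA ha)
  · rintro x ⟨a, ha, hxa⟩
    exact ⟨a, ha, anc_trans ⟨1, rfl⟩ hxa⟩
  · rintro x ⟨a, ha, hxa⟩ y ⟨b, hb, hyb⟩
    rcases htotal a ha b hb with hab | hba
    · exact anc_total_of_anc (anc_trans hxa hab) hyb
    · exact anc_total_of_anc hxa (anc_trans hyb hba)

theorem image_level_ancClosure (hA : A ⊆ T.verts) :
    T.level '' T.ancClosure A = lowerClosure (T.level '' A) := by
  ext m
  simp only [SetLike.mem_coe, mem_lowerClosure, exists_mem_image]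
  constructor
  · rintro ⟨_, ⟨a, ha, n, rfl⟩, rfl⟩
    exact ⟨a, ha, (level_iterate_par (hA ha) n).trans_le (Nat.sub_le _ _)⟩
  · rintro ⟨a, ha, hm⟩
    refine ⟨T.par^[T.level a - m] a, ⟨a, ha, _, rfl⟩, ?_⟩
    rw [level_iterate_par (hA ha), Nat.sub_sub_self hm]

/-- The chart matching the vertices of two rooted paths that lie on the same level; it is a
path-bijection when the two paths meet the same levels. -/
def levelChart (hP : T.IsRootedPath P) (hP' : T.IsRootedPath P') : Chart X where
  rel := {p | p.1 ∈ P ∧ p.2 ∈ P' ∧ T.level p.2 = T.level p.1}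
  functional := by
    rintro x y y' ⟨-, hy, hl⟩ ⟨-, hy', hl'⟩
    exact hP'.injOn_level hy hy' (hl.trans hl'.symm)
  injective := by
    rintro x x' y ⟨hx, -, hl⟩ ⟨hx', -, hl'⟩
    exact hP.injOn_level hx hx' (hl.symm.trans hl')

theorem levelChart_mem_pathSg (hP : T.IsRootedPath P) (hP' : T.IsRootedPath P')
    (h : T.level '' P = T.level '' P') : levelChart hP hP' ∈ pathSg T := by
  refine ⟨⟨P, hP, ?_⟩, ⟨P', hP', ?_⟩, fun x y hxy => hxy.2.2⟩
  · refine Subset.antisymm (fun x ⟨_, hxy⟩ => hxy.1) fun x hx => ?_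
    obtain ⟨y, hy, hl⟩ := h.subset (mem_image_of_mem _ hx)
    exact ⟨y, hx, hy, hl⟩
  · refine Subset.antisymm (fun y ⟨_, hxy⟩ => hxy.2.1) fun y hy => ?_
    obtain ⟨x, hx, hl⟩ := h.superset (mem_image_of_mem _ hy)
    exact ⟨x, hx, hy, hl.symm⟩

theorem exists_levelChart_eq_of_mem_pathSg {f : Chart X} (hf : f ∈ pathSg T) :
    ∃ (P P' : Set X) (hP : T.IsRootedPath P) (hP' : T.IsRootedPath P'),
      T.level '' P = T.level '' P' ∧ levelChart hP hP' = f := by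
  obtain ⟨⟨_, hP, rfl⟩, ⟨_, hP', rfl⟩, hlevel⟩ := hf
  refine ⟨f.dom, f.ran, hP, hP', Subset.antisymm ?_ ?_, ?_⟩
  · rintro _ ⟨x, ⟨y, hxy⟩, rfl⟩
    exact ⟨y, ⟨x, hxy⟩, hlevel x y hxy⟩
  · rintro _ ⟨y, ⟨x, hxy⟩, rfl⟩
    exact ⟨x, ⟨y, hxy⟩, (hlevel x y hxy).symm⟩
  · ext ⟨x, y⟩
    refine ⟨?_, fun hxy => ⟨⟨y, hxy⟩, ⟨x, hxy⟩, hlevel x y hxy⟩⟩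
    rintro ⟨⟨y', hxy'⟩, hy, hl⟩
    have hyy' : y = y' := hP'.injOn_level hy ⟨x, hxy'⟩ (hl.trans (hlevel x y' hxy').symm)
    exact hyy' ▸ hxy'

end RTree

/-- A quasi-embedding of rooted trees: a map on vertices that preserves and reflects both ancestry
and the relation of lying on the same level. Up to isomorphism this is the inclusion of a
quasi-subtree. The values of the map outside `R.verts` are irrelevant. -/
structure IsQuasiEmbedding {X Y : Type*} (ψ : X → Y) (R : RTree X) (T : RTree Y) : Prop where
  mapsTo : MapsTo ψ R.verts T.verts
  anc_iff : ∀ x ∈ R.verts, ∀ y ∈ R.verts, R.anc x y ↔ T.anc (ψ x) (ψ y)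
  level_eq_iff : ∀ x ∈ R.verts, ∀ y ∈ R.verts,
    R.level x = R.level y ↔ T.level (ψ x) = T.level (ψ y)

theorem IsQuasiSubtree.isQuasiEmbedding_id {X : Type u} {Q T : RTree X}
    (h : IsQuasiSubtree Q T) : IsQuasiEmbedding id Q T :=
  ⟨h.1, h.2.1, h.2.2⟩

namespace RTreeIso

variable {X Y : Type u} {T : RTree X} {R : RTree Y}

theorem symm (h : RTreeIso T R) : RTreeIso R T := by
  obtain ⟨φ, hφ, hroot, hpar⟩ := h
  have : Nonempty X := ⟨T.root⟩
  have hinv : InvOn (Function.invFunOn φ T.verts) φ T.verts R.verts := hφ.invOn_invFunOn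
  refine ⟨Function.invFunOn φ T.verts, hφ.symm hinv.symm, ?_, ?_⟩
  · rw [← hroot, hinv.1 T.root_mem]
  · intro y hy
    obtain ⟨x, hx, rfl⟩ := hφ.surjOn hy
    rw [← hpar x hx, hinv.1 (T.par_mem x hx), hinv.1 hx]

theorem exists_isQuasiEmbedding (h : RTreeIso T R) : ∃ φ, IsQuasiEmbedding φ T R := by
  obtain ⟨φ, hφ, hroot, hpar⟩ := h
  have hiter : ∀ x ∈ T.verts, ∀ n, φ (T.par^[n] x) = R.par^[n] (φ x) := by
    intro x hx n
    induction n with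
    | zero => rfl
    | succ n ih =>
      rw [Function.iterate_succ_apply', Function.iterate_succ_apply',
        hpar _ (RTree.iterate_par_mem hx n), ih]
  have hlevel : ∀ x ∈ T.verts, R.level (φ x) = T.level x := by
    intro x hx
    refine eq_of_forall_ge_iff fun n => ?_
    rw [← RTree.iterate_par_eq_root_iff hx, ← RTree.iterate_par_eq_root_iff (hφ.mapsTo hx),
      ← hiter x hx, ← hroot, hφ.injOn.eq_iff (RTree.iterate_par_mem hx n) T.root_mem]
  refine ⟨φ, hφ.mapsTo, fun x hx y hy => exists_congr fun n => ?_, fun x hx y hy => ?_⟩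
  · rw [← hiter y hy, hφ.injOn.eq_iff (RTree.iterate_par_mem hy n) hx]
  · rw [hlevel x hx, hlevel y hy]

end RTreeIso

namespace IsQuasiEmbedding

section

variable {X Y : Type*} {R : RTree X} {T : RTree Y} {ψ : X → Y} {P P' : Set X}

theorem comp {Z : Type*} {S : RTree Z} {χ : Y → Z} (hχ : IsQuasiEmbedding χ T S)
    (hψ : IsQuasiEmbedding ψ R T) : IsQuasiEmbedding (χ ∘ ψ) R S where
  mapsTo := hχ.mapsTo.comp hψ.mapsTo
  anc_iff x hx y hy :=
    (hψ.anc_iff x hx y hy).trans (hχ.anc_iff _ (hψ.mapsTo hx) _ (hψ.mapsTo hy))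
  level_eq_iff x hx y hy :=
    (hψ.level_eq_iff x hx y hy).trans (hχ.level_eq_iff _ (hψ.mapsTo hx) _ (hψ.mapsTo hy))

theorem injOn (hψ : IsQuasiEmbedding ψ R T) : InjOn ψ R.verts := by
  intro x hx y hy hxy
  have hanc : R.anc x y := (hψ.anc_iff x hx y hy).2 (hxy ▸ T.anc_refl (ψ x))
  exact RTree.eq_of_anc_of_level_eq hy hanc ((hψ.level_eq_iff x hx y hy).2 (by rw [hxy]))

theorem image_subset_verts (hψ : IsQuasiEmbedding ψ R T) (hP : P ⊆ R.verts) :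
    ψ '' P ⊆ T.verts :=
  (hψ.mapsTo.mono_left hP).image_subset

theorem isRootedPath_ancClosure_image (hψ : IsQuasiEmbedding ψ R T) (hP : R.IsRootedPath P) :
    T.IsRootedPath (T.ancClosure (ψ '' P)) := by
  refine RTree.isRootedPath_ancClosure (hP.1.image ψ) (hψ.image_subset_verts hP.2.1) ?_
  rintro _ ⟨x, hx, rfl⟩ _ ⟨y, hy, rfl⟩
  exact (hP.2.2.2 x hx y hy).imp (hψ.anc_iff x (hP.2.1 hx) y (hP.2.1 hy)).1
    (hψ.anc_iff y (hP.2.1 hy) x (hP.2.1 hx)).1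

theorem apply_mem_ancClosure_image_iff (hψ : IsQuasiEmbedding ψ R T) (hP : R.IsRootedPath P)
    {x : X} (hx : x ∈ R.verts) : ψ x ∈ T.ancClosure (ψ '' P) ↔ x ∈ P := by
  refine ⟨?_, fun hxP => T.subset_ancClosure _ (mem_image_of_mem ψ hxP)⟩
  rintro ⟨_, ⟨a, ha, rfl⟩, hxa⟩
  exact hP.mem_of_anc ((hψ.anc_iff x hx a (hP.2.1 ha)).2 hxa) ha

theorem image_level_image_subset (hψ : IsQuasiEmbedding ψ R T) (hP : P ⊆ R.verts)
    (hP' : P' ⊆ R.verts) (h : R.level '' P ⊆ R.level '' P') :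
    T.level '' (ψ '' P) ⊆ T.level '' (ψ '' P') := by
  rintro _ ⟨_, ⟨x, hx, rfl⟩, rfl⟩
  obtain ⟨y, hy, hl⟩ := h (mem_image_of_mem _ hx)
  exact ⟨ψ y, mem_image_of_mem ψ hy, (hψ.level_eq_iff y (hP' hy) x (hP hx)).1 hl⟩

theorem image_level_ancClosure_image_eq (hψ : IsQuasiEmbedding ψ R T) (hP : R.IsRootedPath P)
    (hP' : R.IsRootedPath P') (h : R.level '' P = R.level '' P') :
    T.level '' T.ancClosure (ψ '' P) = T.level '' T.ancClosure (ψ '' P') := by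
  have himage : T.level '' (ψ '' P) = T.level '' (ψ '' P') :=
    (hψ.image_level_image_subset hP.2.1 hP'.2.1 h.subset).antisymm
      (hψ.image_level_image_subset hP'.2.1 hP.2.1 h.superset)
  rw [RTree.image_level_ancClosure (hψ.image_subset_verts hP.2.1),
    RTree.image_level_ancClosure (hψ.image_subset_verts hP'.2.1), himage]

end

variable {X : Type u} {R T : RTree X} {ψ : X → X}

theorem levelChart_eq_conj (hψ : IsQuasiEmbedding ψ R T) {P P' : Set X}
    (hP : R.IsRootedPath P) (hP' : R.IsRootedPath P') :
    RTree.levelChart hP hP' =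
      Chart.ofInjOn ψ hψ.injOn *
        (RTree.levelChart (hψ.isRootedPath_ancClosure_image hP)
          (hψ.isRootedPath_ancClosure_image hP') * (Chart.ofInjOn ψ hψ.injOn)⁻¹) := by
  ext ⟨x, y⟩
  constructor
  · rintro ⟨hx, hy, hl⟩
    have hxR := hP.2.1 hx
    have hyR := hP'.2.1 hy
    exact ⟨ψ x, ⟨hxR, rfl⟩, ψ y,
      ⟨(hψ.apply_mem_ancClosure_image_iff hP hxR).2 hx,
        (hψ.apply_mem_ancClosure_image_iff hP' hyR).2 hy,
        (hψ.level_eq_iff y hyR x hxR).1 hl⟩, hyR, rfl⟩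
  · rintro ⟨_, ⟨hxR, hψx⟩, _, ⟨hx, hy, hl⟩, hyR, hψy⟩
    dsimp only at hψx hψy
    subst hψx hψy
    exact ⟨(hψ.apply_mem_ancClosure_image_iff hP hxR).1 hx,
      (hψ.apply_mem_ancClosure_image_iff hP' hyR).1 hy, (hψ.level_eq_iff y hyR x hxR).2 hl⟩

theorem bsleq_pathSg (hψ : IsQuasiEmbedding ψ R T) : BSleq (pathSg R) (pathSg T) := by
  refine ⟨{Chart.ofInjOn ψ hψ.injOn, (Chart.ofInjOn ψ hψ.injOn)⁻¹}, by simp, fun f hf => ?_⟩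
  obtain ⟨P, P', hP, hP', hlevels, rfl⟩ := RTree.exists_levelChart_eq_of_mem_pathSg hf
  rw [hψ.levelChart_eq_conj hP hP']
  have hg := RTree.levelChart_mem_pathSg (hψ.isRootedPath_ancClosure_image hP)
    (hψ.isRootedPath_ancClosure_image hP') (hψ.image_level_ancClosure_image_eq hP hP' hlevels)
  exact .mul (.base (by simp)) (.mul (.base (.inl hg)) (.base (by simp)))

end IsQuasiEmbedding

theorem stmt12_general {X : Type u} (T R : RTree X)
    (hQ : ∃ Q : RTree X, IsQuasiSubtree Q T ∧ RTreeIso Q R) :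
    BSleq (pathSg R) (pathSg T) := by
  obtain ⟨Q, hQT, hQR⟩ := hQ
  obtain ⟨ψ, hψ⟩ := hQR.symm.exists_isQuasiEmbedding
  exact (hQT.isQuasiEmbedding_id.comp hψ).bsleq_pathSg

/-- if `T` and `R` are rooted trees whose vertex sets have union
`X`, and `T` contains a quasi-subtree `Q` isomorphic to `R` as a rooted tree,
then `𝒮(R) ≼ 𝒮(T)`. -/
theorem stmt12 {X : Type u} (T R : RTree X)
    (hunion : T.verts ∪ R.verts = Set.univ)
    (hQ : ∃ Q : RTree X, IsQuasiSubtree Q T ∧ RTreeIso Q R) :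
    BSleq (pathSg R) (pathSg T) :=
  stmt12_general T R hQ
end

section
/- Let T^(ℵ0) be the infinitary rooted tree (the regular rooted tree in which every vertex has countably infinitely many children) on a countably infinite vertex set X. Then 𝒮(T^(ℵ0)) ≈ I_X. -/
open Set Cardinal

universe u

/-!
A chart `f` on `X` becomes an involution of `X ⊕ X` by swapping `inl x` with `inr y` whenever `f`
maps `x` to `y`, so it suffices to permute the vertices of one fixed branch of the tree by an
arbitrary involution of `ℕ`. Every involution of `ℕ` is a product of two involutions that each
preserve arbitrarily long initial segments of `ℕ`: cut `ℕ` into consecutive intervals so long that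
the involution moves no point further than to an adjacent interval, pair these intervals up, and
treat the points staying inside a pair and the points changing pair separately. An involution `s`
of this restricted kind can be written along a branch of the tree, the `n`-th letter recording `s`
on the shortest invariant initial segment containing `n`. A vertex of such a branch then determines
both its image under `s` and the branch up to that image, so one single chart performs all these
involutions, each on its own branch, and the path-bijections move the fixed branch there and back.
-/

section Generation

variable {X : Type u}

theorem Sgen_mono {S T : Set (Chart X)} (hST : S ⊆ T) : Sgen S ⊆ Sgen T := by
  intro f hf
  induction hf with
  | base h => exact .base (hST h)
  | mul _ _ ihf ihg => exact .mul ihf ihg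

theorem BSleq.of_subset {S T : Set (Chart X)} (hST : S ⊆ T) : BSleq S T :=
  ⟨∅, countable_empty, fun _ hf => .base (.inl (hST hf))⟩

theorem BSleq.of_union_countable {S T U : Set (Chart X)} (hU : U.Countable)
    (h : BSleq S (T ∪ U)) : BSleq S T := by
  obtain ⟨V, hV, hS⟩ := h
  exact ⟨U ∪ V, hU.union hV, union_assoc T U V ▸ hS⟩

/-- The charts generated by `S` carry the family of points `v` to the family `w`: one of them maps
every `v i` to `w i`. -/
def Carries {ι : Type*} (S : Set (Chart X)) (v w : ι → X) : Prop :=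
  ∃ f ∈ Sgen S, ∀ i, (v i, w i) ∈ f.rel

namespace Carries

variable {ι κ : Type*} {S : Set (Chart X)} {u v w : ι → X}

theorem of_mem {f : Chart X} (hf : f ∈ S) (h : ∀ i, (v i, w i) ∈ f.rel) : Carries S v w :=
  ⟨f, .base hf, h⟩

theorem trans (huv : Carries S u v) (hvw : Carries S v w) : Carries S u w := by
  obtain ⟨f, hfS, hf⟩ := huv
  obtain ⟨g, hgS, hg⟩ := hvw
  exact ⟨f * g, .mul hfS hgS, fun i => ⟨v i, hf i, hg i⟩⟩

theorem comp (hvw : Carries S v w) (k : κ → ι) : Carries S (v ∘ k) (w ∘ k) := by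
  obtain ⟨f, hfS, hf⟩ := hvw
  exact ⟨f, hfS, fun i => hf (k i)⟩

end Carries

end Generation

namespace Chart

variable {X : Type u}

theorem ext_rel {f g : Chart X} (h : ∀ x y, (x, y) ∈ f.rel ↔ (x, y) ∈ g.rel) : f = g := by
  obtain ⟨r, _, _⟩ := f
  obtain ⟨r', _, _⟩ := g
  obtain rfl : r = r' := Set.ext fun p => h p.1 p.2
  rfl

theorem mem_mul {f g : Chart X} {x z : X} :
    (x, z) ∈ (f * g).rel ↔ ∃ y, (x, y) ∈ f.rel ∧ (y, z) ∈ g.rel := Iff.rfl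

theorem mem_inv {f : Chart X} {x y : X} : (x, y) ∈ f⁻¹.rel ↔ (y, x) ∈ f.rel := Iff.rfl

/-- The graph of an injective map `X → X`, as an everywhere defined chart. -/
def ofInjective (g : X → X) (hg : Function.Injective g) : Chart X where
  rel := {p | g p.1 = p.2}
  functional _ _ _ h h' := h.symm.trans h'
  injective _ _ _ h h' := hg (h.trans h'.symm)

theorem mem_ofInjective {g : X → X} {hg : Function.Injective g} {x y : X} :
    (x, y) ∈ (ofInjective g hg).rel ↔ g x = y := Iff.rfl

open Classical in
/-- The involution of `X ⊕ X` swapping `inl x` with `inr y` whenever the chart maps `x` to `y`, and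
fixing all other points. -/
noncomputable def swap (f : Chart X) : X ⊕ X → X ⊕ X
  | .inl x => if h : ∃ y, (x, y) ∈ f.rel then .inr h.choose else .inl x
  | .inr y => if h : ∃ x, (x, y) ∈ f.rel then .inl h.choose else .inr y

variable {f : Chart X} {x y : X}

theorem swap_inl (h : (x, y) ∈ f.rel) : f.swap (.inl x) = .inr y := by
  have hx : ∃ y, (x, y) ∈ f.rel := ⟨y, h⟩
  simp only [swap, dif_pos hx, f.functional hx.choose_spec h]

theorem swap_inr (h : (x, y) ∈ f.rel) : f.swap (.inr y) = .inl x := by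
  have hy : ∃ x, (x, y) ∈ f.rel := ⟨x, h⟩
  simp only [swap, dif_pos hy, f.injective hy.choose_spec h]

theorem swap_inl_eq_inr : f.swap (.inl x) = .inr y ↔ (x, y) ∈ f.rel := by
  refine ⟨fun h => ?_, swap_inl⟩
  by_cases hx : ∃ y, (x, y) ∈ f.rel
  · obtain ⟨y', hy'⟩ := hx
    rw [swap_inl hy', Sum.inr.injEq] at h
    exact h ▸ hy'
  · simp [swap, hx] at h

theorem swap_involutive (f : Chart X) : Function.Involutive f.swap := by
  rintro (x | y)
  · by_cases hx : ∃ y, (x, y) ∈ f.rel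
    · obtain ⟨y, h⟩ := hx
      rw [swap_inl h, swap_inr h]
    · simp only [swap, dif_neg hx]
  · by_cases hy : ∃ x, (x, y) ∈ f.rel
    · obtain ⟨x, h⟩ := hy
      rw [swap_inr h, swap_inl h]
    · simp only [swap, dif_neg hy]

end Chart

theorem bsleq_univ_of_carries_involutive {X : Type u} {S : Set (Chart X)} {v : X ⊕ X → X}
    (hv : Function.Injective v)
    (hS : ∀ σ : X ⊕ X → X ⊕ X, Function.Involutive σ → Carries S v (v ∘ σ)) :
    BSleq univ S := by
  let a : Chart X := .ofInjective (v ∘ .inl) (hv.comp Sum.inl_injective)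
  let b : Chart X := .ofInjective (v ∘ .inr) (hv.comp Sum.inr_injective)
  refine ⟨{a, b⁻¹}, (toFinite _).countable, fun f _ => ?_⟩
  obtain ⟨h, hhS, hh⟩ := hS f.swap f.swap_involutive
  have ha : a ∈ Sgen (S ∪ {a, b⁻¹}) := .base (by simp)
  have hb : b⁻¹ ∈ Sgen (S ∪ {a, b⁻¹}) := .base (by simp)
  have hf : f = a * (h * b⁻¹) := Chart.ext_rel fun x y => by
    calc (x, y) ∈ f.rel
        ↔ v (f.swap (.inl x)) = v (.inr y) := by rw [hv.eq_iff, Chart.swap_inl_eq_inr]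
      _ ↔ (v (.inl x), v (.inr y)) ∈ h.rel :=
        ⟨fun e => e ▸ hh (.inl x), h.functional (hh (.inl x))⟩
      _ ↔ (x, y) ∈ (a * (h * b⁻¹)).rel := by
        simp only [a, b, Chart.mem_mul, Chart.mem_inv, Chart.mem_ofInjective, Function.comp_apply,
          exists_eq_left', exists_eq_right']
  rw [hf]
  exact .mul ha (.mul (Sgen_mono subset_union_left hhS) hb)

section Involutions

variable {α : Type*} {s : α → α} {A : Set α}

theorem involutive_piecewise_id [DecidablePred (· ∈ A)] (hs : Function.Involutive s)
    (hA : ∀ a, s a ∈ A ↔ a ∈ A) : Function.Involutive (A.piecewise s id) := by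
  intro a
  by_cases ha : a ∈ A <;> simp [ha, hA, hs a]

theorem piecewise_compl_comp_piecewise [DecidablePred (· ∈ A)] [DecidablePred (· ∈ Aᶜ)]
    (hA : ∀ a, s a ∈ A ↔ a ∈ A) :
    Aᶜ.piecewise s id ∘ A.piecewise s id = s := by
  funext a
  by_cases ha : a ∈ A <;> simp [ha, hA]

end Involutions

section FiniteBlocks

/-- The map `s` preserves arbitrarily long initial segments of `ℕ`, so that `ℕ` is cut into finite
intervals each of which `s` maps to itself when `s` is an involution. -/
def HasFiniteBlocks (s : ℕ → ℕ) : Prop := ∀ n, ∃ N, n < N ∧ MapsTo s (Iio N) (Iio N)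

theorem hasFiniteBlocks_of_comp_eq {s b : ℕ → ℕ} (hb : Monotone b)
    (hb_unbdd : ∀ i, ∃ n, i < b n) (hbs : ∀ n, b (s n) = b n) : HasFiniteBlocks s := by
  intro n
  have hmem : ∀ k, k ∈ Iio (Nat.find (hb_unbdd (b n))) ↔ b k ≤ b n := fun k =>
    ⟨fun hk => not_lt.1 (Nat.find_min (hb_unbdd (b n)) hk), fun hk => hb.reflect_lt
      (hk.trans_lt (Nat.find_spec (hb_unbdd (b n))))⟩
  exact ⟨_, (hmem n).2 le_rfl, fun k hk => (hmem _).2 ((hbs k).trans_le ((hmem k).1 hk))⟩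

theorem exists_strictMono_forall_lt_succ (s : ℕ → ℕ) :
    ∃ K : ℕ → ℕ, StrictMono K ∧ ∀ i, ∀ n < K i, s n < K (i + 1) := by
  let M : ℕ → ℕ := fun k => k + partialSups s k + 1
  have hK : ∀ i, M^[i + 1] 0 = M^[i] 0 + partialSups s (M^[i] 0) + 1 := fun i =>
    Function.iterate_succ_apply' M i 0
  refine ⟨fun i => M^[i] 0, strictMono_nat_of_lt_succ fun i => ?_, fun i n hn => ?_⟩
  · have := hK i
    lia
  · have : s n ≤ partialSups s (M^[i] 0) := le_partialSups_of_le s hn.le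
    have := hK i
    lia

theorem exists_monotone_comp_le_add_one (s : ℕ → ℕ) :
    ∃ b : ℕ → ℕ, Monotone b ∧ (∀ i, ∃ n, i < b n) ∧ ∀ n, b (s n) ≤ b n + 1 := by
  obtain ⟨K, hK, hKs⟩ := exists_strictMono_forall_lt_succ s
  have hlt : ∀ n, ∃ i, n < K i := fun n => ⟨n + 1, Nat.lt_of_succ_le hK.le_apply⟩
  have hfind : ∀ n, n < K (Nat.find (hlt n)) := fun n => Nat.find_spec (hlt n)
  exact ⟨fun n => Nat.find (hlt n),
    fun m n hmn => Nat.find_min' _ (hmn.trans_lt (hfind n)),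
    fun i => ⟨K i, hK.lt_iff_lt.1 (hfind (K i))⟩,
    fun n => Nat.find_min' _ (hKs _ n (hfind n))⟩

theorem exists_involutive_hasFiniteBlocks_comp_eq {s : ℕ → ℕ} (hs : Function.Involutive s) :
    ∃ s₁ s₂ : ℕ → ℕ, (Function.Involutive s₁ ∧ HasFiniteBlocks s₁) ∧
      (Function.Involutive s₂ ∧ HasFiniteBlocks s₂) ∧ s₂ ∘ s₁ = s := by
  classical
  obtain ⟨b, hb, hb_unbdd, hbs⟩ := exists_monotone_comp_le_add_one s
  have hbs' : ∀ n, b n ≤ b (s n) + 1 := fun n => by simpa only [hs n] using hbs (s n)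
  let A : Set ℕ := {n | b n / 2 = b (s n) / 2}
  have hA : ∀ n, s n ∈ A ↔ n ∈ A := fun n => by simp [A, hs n, eq_comm]
  have hA_compl : ∀ n, s n ∈ Aᶜ ↔ n ∈ Aᶜ := fun n => (hA n).not
  refine ⟨A.piecewise s id, Aᶜ.piecewise s id, ⟨involutive_piecewise_id hs hA, ?_⟩,
    ⟨involutive_piecewise_id hs hA_compl, ?_⟩, piecewise_compl_comp_piecewise hA⟩
  · refine hasFiniteBlocks_of_comp_eq (b := fun n => b n / 2)
      (fun m n hmn => Nat.div_le_div_right (hb hmn)) (fun i => ?_) fun n => ?_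
    · obtain ⟨n, hn⟩ := hb_unbdd (2 * i + 1)
      exact ⟨n, by lia⟩
    · by_cases hn : n ∈ A
      · simpa [hn] using Eq.symm hn
      · simp [hn]
  -- A point changing pair moves between the intervals `2 * j + 1` and `2 * j + 2` for some `j`.
  · refine hasFiniteBlocks_of_comp_eq (b := fun n => (b n + 1) / 2)
      (fun m n hmn => Nat.div_le_div_right (Nat.add_le_add_right (hb hmn) 1)) (fun i => ?_)
      fun n => ?_
    · obtain ⟨n, hn⟩ := hb_unbdd (2 * i + 1)
      exact ⟨n, by lia⟩
    · by_cases hn : n ∈ A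
      · simp [hn]
      · have hn' : b n / 2 ≠ b (s n) / 2 := hn
        have := hbs n
        have := hbs' n
        simp only [mem_compl_iff, hn, not_false_eq_true, piecewise_eq_of_mem]
        lia

/-- The length of the shortest `s`-invariant initial segment of `ℕ` containing `n`; the junk value
`0` if there is none. -/
noncomputable def blockEnd (s : ℕ → ℕ) (n : ℕ) : ℕ :=
  sInf {N | n < N ∧ MapsTo s (Iio N) (Iio N)}

/-- The values of `s` on its shortest invariant initial segment containing `n`: the letter at place
`n` of the word coding `s` along a branch. -/
noncomputable def blockWord (s : ℕ → ℕ) (n : ℕ) : List ℕ := (List.range (blockEnd s n)).map s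

variable {s t : ℕ → ℕ} {n k : ℕ}

theorem blockEnd_spec (hs : HasFiniteBlocks s) (n : ℕ) :
    n < blockEnd s n ∧ MapsTo s (Iio (blockEnd s n)) (Iio (blockEnd s n)) :=
  Nat.sInf_mem (hs n)

theorem blockEnd_le {N : ℕ} (hn : n < N) (hN : MapsTo s (Iio N) (Iio N)) : blockEnd s n ≤ N :=
  Nat.sInf_le ⟨hn, hN⟩

theorem blockEnd_eq_of_le_of_lt (hs : HasFiniteBlocks s) (hnk : n ≤ k) (hk : k < blockEnd s n) :
    blockEnd s k = blockEnd s n :=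
  have hks := blockEnd_spec hs k
  (blockEnd_le hk (blockEnd_spec hs n).2).antisymm (blockEnd_le (hnk.trans_lt hks.1) hks.2)

theorem blockWord_eq_blockWord_iff :
    blockWord s n = blockWord t n ↔
      blockEnd s n = blockEnd t n ∧ ∀ k < blockEnd s n, s k = t k := by
  refine ⟨fun h => ?_, fun ⟨hend, hst⟩ => ?_⟩
  · have hend : blockEnd s n = blockEnd t n := by
      simpa [blockWord] using congrArg List.length h
    rw [blockWord, blockWord, ← hend, List.map_inj_left] at h
    exact ⟨hend, fun k hk => h k (List.mem_range.2 hk)⟩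
  · rw [blockWord, blockWord, ← hend, List.map_inj_left]
    exact fun k hk => hst k (List.mem_range.1 hk)

theorem eq_and_blockWord_eq_of_forall_le (hs : HasFiniteBlocks s) (ht : HasFiniteBlocks t)
    (h : ∀ k ≤ n, blockWord s k = blockWord t k) :
    s n = t n ∧ ∀ k ≤ s n, blockWord s k = blockWord t k := by
  obtain ⟨hn, hmaps⟩ := blockEnd_spec hs n
  obtain ⟨hend, hst⟩ := blockWord_eq_blockWord_iff.1 (h n le_rfl)
  refine ⟨hst n hn, fun k hk => ?_⟩
  obtain hkn | hnk := le_total k n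
  · exact h k hkn
  · have hks : k < blockEnd s n := hk.trans_lt (hmaps hn)
    have hs_eq := blockEnd_eq_of_le_of_lt hs hnk hks
    have ht_eq := blockEnd_eq_of_le_of_lt ht hnk (hend ▸ hks)
    exact blockWord_eq_blockWord_iff.2 ⟨by rw [hs_eq, ht_eq, hend], by rwa [hs_eq]⟩

end FiniteBlocks

namespace RTree

variable {X : Type u} {T : RTree X}

theorem level_root : T.level T.root = 0 := Nat.sInf_eq_zero.2 (.inl rfl)

theorem level_of_mem_children {x y : X} (hy : y ∈ T.children x) : T.level y = T.level x + 1 := by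
  obtain ⟨hy_mem, rfl, hne⟩ := hy
  have hroot : y ≠ T.root := by
    rintro rfl
    exact hne T.par_root.symm
  have hpos : 1 ≤ sInf {n | T.par^[n] y = T.root} :=
    Nat.one_le_iff_ne_zero.2 fun h => (Nat.sInf_eq_zero.1 h).elim hroot
      (nonempty_iff_ne_empty.1 (T.par_reaches y hy_mem))
  exact (Nat.sInf_add hpos).symm

/-- The sequence `v` enumerates an infinite rooted path of `T` from the root upwards. -/
def IsBranch (T : RTree X) (v : ℕ → X) : Prop :=
  v 0 = T.root ∧ ∀ n, v (n + 1) ∈ T.children (v n)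

namespace IsBranch

variable {v w : ℕ → X}

theorem level_eq (hv : T.IsBranch v) (n : ℕ) : T.level (v n) = n := by
  induction n with
  | zero => rw [hv.1, level_root]
  | succ n ih => rw [level_of_mem_children (hv.2 n), ih]

theorem injective (hv : T.IsBranch v) : Function.Injective v :=
  Function.LeftInverse.injective hv.level_eq

theorem anc_of_le (hv : T.IsBranch v) {m n : ℕ} (hmn : m ≤ n) : T.anc (v m) (v n) := by
  induction n, hmn using Nat.le_induction with
  | base => exact ⟨0, rfl⟩
  | succ n _ ih =>
    obtain ⟨k, hk⟩ := ih
    exact ⟨k + 1, by rw [Function.iterate_succ_apply, (hv.2 n).2.1, hk]⟩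

theorem isRootedPath_range (hv : T.IsBranch v) : T.IsRootedPath (range v) := by
  refine ⟨range_nonempty v, ?_, ?_, ?_⟩
  · rintro _ ⟨_ | n, rfl⟩
    · exact hv.1 ▸ T.root_mem
    · exact (hv.2 n).1
  · rintro _ ⟨_ | n, rfl⟩
    · exact ⟨0, by rw [hv.1, T.par_root]⟩
    · exact ⟨n, (hv.2 n).2.1.symm⟩
  · rintro _ ⟨m, rfl⟩ _ ⟨n, rfl⟩
    exact (le_total m n).imp hv.anc_of_le hv.anc_of_le

/-- The path-bijection between two branches. -/
def chart (hv : T.IsBranch v) (hw : T.IsBranch w) : Chart X where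
  rel := range fun n => (v n, w n)
  functional := by
    rintro x y y' ⟨m, hm⟩ ⟨n, hn⟩
    grind [hv.injective.eq_iff]
  injective := by
    rintro x x' y ⟨m, hm⟩ ⟨n, hn⟩
    grind [hw.injective.eq_iff]

theorem chart_mem_pathSg (hv : T.IsBranch v) (hw : T.IsBranch w) :
    hv.chart hw ∈ pathSg T := by
  refine ⟨⟨_, hv.isRootedPath_range, ?_⟩, ⟨_, hw.isRootedPath_range, ?_⟩, ?_⟩
  · ext x
    simp [Chart.dom, chart, exists_comm]
  · ext y
    simp [Chart.ran, chart, exists_comm]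
  · rintro x y ⟨n, hn⟩
    obtain ⟨rfl, rfl⟩ := Prod.mk.inj hn
    rw [hv.level_eq, hw.level_eq]

theorem carries {S : Set (Chart X)} (hS : pathSg T ⊆ S) (hv : T.IsBranch v)
    (hw : T.IsBranch w) : Carries S v w :=
  .of_mem (hS (hv.chart_mem_pathSg hw)) mem_range_self

end IsBranch

/-- The map `c` labels some of the children of every vertex of `T` injectively by the elements of
`ι`, so that sequences in `ι` describe branches. -/
def IsChildLabelling {ι : Type*} (T : RTree X) (c : X → ι → X) : Prop :=
  ∀ x ∈ T.verts, Function.Injective (c x) ∧ ∀ i, c x i ∈ T.children x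

theorem exists_isChildLabelling (ι : Type*) [Countable ι]
    (hchild : ∀ x ∈ T.verts, (T.children x).Infinite) :
    ∃ c : X → ι → X, T.IsChildLabelling c := by
  have : Nonempty X := ⟨T.root⟩
  obtain ⟨e, he⟩ := exists_injective_nat ι
  have hlabel : ∀ x ∈ T.verts, ∃ g : ι → X, Function.Injective g ∧ ∀ i, g i ∈ T.children x :=
    fun x hx =>
      let g := (hchild x hx).natEmbedding
      ⟨fun i => g (e i), Subtype.val_injective.comp (g.injective.comp he), fun i => (g (e i)).2⟩
  choose! c hc using hlabel
  exact ⟨c, hc⟩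

/-- The branch of `T` that follows the labels `w 0, w 1, …` from the root. -/
def branch {ι : Type*} (T : RTree X) (c : X → ι → X) (w : ℕ → ι) : ℕ → X
  | 0 => T.root
  | n + 1 => c (branch T c w n) (w n)

namespace IsChildLabelling

variable {ι : Type*} {c : X → ι → X}

theorem branch_mem_verts (hc : T.IsChildLabelling c) (w : ℕ → ι) (n : ℕ) :
    T.branch c w n ∈ T.verts := by
  induction n with
  | zero => exact T.root_mem
  | succ n ih => exact ((hc _ ih).2 (w n)).1

theorem isBranch (hc : T.IsChildLabelling c) (w : ℕ → ι) : T.IsBranch (T.branch c w) :=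
  ⟨rfl, fun n => (hc _ (hc.branch_mem_verts w n)).2 (w n)⟩

theorem branch_eq_branch_iff (hc : T.IsChildLabelling c) {w w' : ℕ → ι} {m n : ℕ} :
    T.branch c w m = T.branch c w' n ↔ m = n ∧ ∀ k < m, w k = w' k := by
  refine ⟨fun h => ?_, ?_⟩
  · obtain rfl : m = n := by rw [← (hc.isBranch w).level_eq m, h, (hc.isBranch w').level_eq]
    refine ⟨rfl, ?_⟩
    induction m with
    | zero => exact fun k hk => absurd hk k.not_lt_zero
    | succ m ih =>
      have hpar : T.branch c w m = T.branch c w' m := by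
        rw [← ((hc.isBranch w).2 m).2.1, h, ((hc.isBranch w').2 m).2.1]
      have hlast : w m = w' m :=
        (hc _ (hc.branch_mem_verts w m)).1 (h.trans (by rw [hpar, branch]))
      exact Nat.forall_lt_succ_right.2 ⟨ih hpar, hlast⟩
  · rintro ⟨rfl, h⟩
    induction m with
    | zero => rfl
    | succ m ih =>
      rw [branch, branch, ih fun k hk => h k (hk.trans m.lt_succ_self), h m m.lt_succ_self]

end IsChildLabelling

section Universal

variable {c : X → List ℕ → X}

/-- The branch coding `s`, without the root: its `n`-th vertex has level `n + 1` and carries the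
letters at the places up to `n`. -/
noncomputable def codeBranch (T : RTree X) (c : X → List ℕ → X) (s : ℕ → ℕ) (n : ℕ) : X :=
  T.branch c (blockWord s) (n + 1)

theorem codeBranch_apply_eq_of_eq (hc : T.IsChildLabelling c) {s t : ℕ → ℕ}
    (hs : HasFiniteBlocks s) (ht : HasFiniteBlocks t) {m n : ℕ}
    (h : T.codeBranch c s m = T.codeBranch c t n) :
    T.codeBranch c s (s m) = T.codeBranch c t (t n) := by
  obtain ⟨hmn, hword⟩ := hc.branch_eq_branch_iff.1 h
  obtain rfl : m = n := Nat.succ_injective hmn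
  obtain ⟨hst, hword'⟩ := eq_and_blockWord_eq_of_forall_le hs ht fun k hk =>
    hword k (Nat.lt_succ_of_le hk)
  exact hc.branch_eq_branch_iff.2 ⟨by rw [hst], fun k hk => hword' k (Nat.le_of_lt_succ hk)⟩

/-- The relation acting on the branch coding `s` as `s` does on `ℕ`, simultaneously for all
involutions `s` of `ℕ` with finite blocks. -/
def universalRel (T : RTree X) (c : X → List ℕ → X) : Set (X × X) :=
  {p | ∃ s, Function.Involutive s ∧ HasFiniteBlocks s ∧
    ∃ n, T.codeBranch c s n = p.1 ∧ T.codeBranch c s (s n) = p.2}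

theorem universalRel_functional (hc : T.IsChildLabelling c) {x y y' : X}
    (h : (x, y) ∈ T.universalRel c) (h' : (x, y') ∈ T.universalRel c) : y = y' := by
  obtain ⟨s, -, hs, m, hm, rfl⟩ := h
  obtain ⟨t, -, ht, n, hn, rfl⟩ := h'
  exact codeBranch_apply_eq_of_eq hc hs ht (hm.trans hn.symm)

theorem universalRel_symm {x y : X} (h : (x, y) ∈ T.universalRel c) :
    (y, x) ∈ T.universalRel c := by
  obtain ⟨s, hs, hs', n, hx, hy⟩ := h
  exact ⟨s, hs, hs', s n, hy, by rwa [hs n]⟩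

/-- The single chart added to the path-bijections: it performs every involution of `ℕ` with finite
blocks, on the branch coding that involution. -/
def universalChart (hc : T.IsChildLabelling c) : Chart X where
  rel := T.universalRel c
  functional _ _ _ := universalRel_functional hc
  injective _ _ _ h h' := universalRel_functional hc (universalRel_symm h) (universalRel_symm h')

variable {v : ℕ → X} {s : ℕ → ℕ}

theorem IsBranch.carries_comp_of_hasFiniteBlocks (hv : T.IsBranch v) (hc : T.IsChildLabelling c)
    (hs : Function.Involutive s) (hs' : HasFiniteBlocks s) :
    Carries (pathSg T ∪ {universalChart hc}) (v ∘ Nat.succ) (v ∘ Nat.succ ∘ s) := by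
  have hw := hc.isBranch (blockWord s)
  have hswap : Carries (pathSg T ∪ {universalChart hc}) (T.codeBranch c s)
      (T.codeBranch c s ∘ s) :=
    .of_mem (.inr rfl) fun n => ⟨s, hs, hs', n, rfl, rfl⟩
  exact ((hv.carries subset_union_left hw).comp Nat.succ).trans
    (hswap.trans ((hw.carries subset_union_left hv).comp (Nat.succ ∘ s)))

theorem IsBranch.carries_comp_of_involutive (hv : T.IsBranch v) (hc : T.IsChildLabelling c)
    (hs : Function.Involutive s) :
    Carries (pathSg T ∪ {universalChart hc}) (v ∘ Nat.succ) (v ∘ Nat.succ ∘ s) := by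
  obtain ⟨s₁, s₂, ⟨hs₁, hs₁'⟩, ⟨hs₂, hs₂'⟩, rfl⟩ := exists_involutive_hasFiniteBlocks_comp_eq hs
  exact (hv.carries_comp_of_hasFiniteBlocks hc hs₁ hs₁').trans
    ((hv.carries_comp_of_hasFiniteBlocks hc hs₂ hs₂').comp s₁)

end Universal

end RTree

theorem stmt13_general {X : Type u} [Countable X] (T : RTree X)
    (hchild : ∀ x ∈ T.verts, (T.children x).Infinite) :
    BSequiv (pathSg T) (Set.univ : Set (Chart X)) := by
  refine ⟨.of_subset (subset_univ _), ?_⟩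
  obtain ⟨c, hc⟩ := RTree.exists_isChildLabelling (List ℕ) hchild
  have hv := hc.isBranch fun _ => []
  have : Infinite X := .of_injective _ hv.injective
  obtain ⟨E⟩ := nonempty_equiv_of_countable (α := X ⊕ X) (β := ℕ)
  refine .of_union_countable (countable_singleton (RTree.universalChart hc))
    (bsleq_univ_of_carries_involutive (hv.injective.comp (Nat.succ_injective.comp E.injective))
      fun σ hσ => ?_)
  have hs : Function.Involutive (E ∘ σ ∘ E.symm) := fun n => by simp [hσ _]
  simpa [Function.comp_def] using (hv.carries_comp_of_involutive hc hs).comp E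

/-- for the infinitary rooted tree (every vertex has countably
infinitely many children) on a countably infinite vertex set `X`,
`𝒮(T^(ℵ₀)) ≈ I_X`. -/
theorem stmt13 {X : Type u} [Countable X] [Infinite X] (T : RTree X)
    (hT : T.verts = Set.univ) (hchild : ∀ x : X, (T.children x).Infinite) :
    BSequiv (pathSg T) (Set.univ : Set (Chart X)) := by
  exact stmt13_general T fun x _ => hchild x
end

section
/- Let T^(rec) be the recursive rooted tree on a countably infinite vertex set X. Then for every natural number n ≥ 1, level n of T^(rec) contains exactly 2^(n−1) vertices of infinite degree (i.e. vertices with infinitely many children). -/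
open Set Cardinal

universe u

/-- The vertex set of the recursive rooted tree `T^(rec)`, in the convention
where vertices are finite sequences of natural numbers (the empty sequence is
the root, and the parent of a sequence is obtained by dropping its last entry):
a list `l = (n_0, …, n_{k-1})` is a vertex iff whenever `i < j ≤ i + n_i` (with
`j` a valid index) we have `n_j = 0`. -/
def RecVerts : Set (List ℕ) :=
  {l | ∀ i j : ℕ, i < j → j < l.length → j ≤ i + l.getD i 0 → l.getD j 0 = 0}

/- A vertex has infinitely many children exactly when none of the straight segments started along it
is still running, that is, when it is a concatenation of complete segments `m, 0, …, 0` (`m` zeros).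
Such a factorisation is unique, so the vertices of infinite degree on level `n` correspond to the
compositions of `n`, of which there are `2 ^ (n - 1)`. -/

theorem replicate_prefix_iff_forall_mem_take {α : Type*} {k : ℕ} {x : α} {l : List α} :
    List.replicate k x <+: l ↔ k ≤ l.length ∧ ∀ y ∈ l.take k, y = x := by
  rw [List.prefix_iff_eq_take, List.length_replicate, eq_comm, List.eq_replicate_iff,
    List.length_take, min_eq_left_iff]

theorem nil_mem_recVerts : [] ∈ RecVerts := by
  simp [RecVerts]

theorem cons_mem_recVerts_iff {a : ℕ} {r : List ℕ} :
    a :: r ∈ RecVerts ↔ (∀ x ∈ r.take a, x = 0) ∧ r ∈ RecVerts := by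
  have forall_take : (∀ x ∈ r.take a, x = 0) ↔ ∀ j < r.length, j < a → r.getD j 0 = 0 := by
    simp only [List.forall_mem_iff_getElem, List.length_take, List.getElem_take]
    grind
  rw [forall_take]
  constructor
  · refine fun h ↦ ⟨fun j hj hja ↦ ?_, fun i j hij hj hji ↦ ?_⟩
    · simpa using h 0 (j + 1) (by omega) (by simpa using hj) (by simpa using hja)
    · simpa using h (i + 1) (j + 1) (by omega) (by simpa using hj)
        (by rw [List.getD_cons_succ]; omega)
  · rintro ⟨hzero, hr⟩ (_ | i) (_ | j) hij hj hji
    · omega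
    · exact hzero j (by simpa using hj) (by simpa using hji)
    · omega
    · rw [List.getD_cons_succ] at hji ⊢
      exact hr i j (by omega) (by simpa using hj) (by omega)

/-- The vertices of `T^(rec)` with infinitely many children. Since a vertex has at most one parent,
these are its vertices of infinite degree. -/
def InfDegVerts : Set (List ℕ) :=
  {l | l ∈ RecVerts ∧ {m : ℕ | l ++ [m] ∈ RecVerts}.Infinite}

theorem nil_mem_infDegVerts : [] ∈ InfDegVerts := by
  have children_eq_univ : {m : ℕ | [] ++ [m] ∈ RecVerts} = Set.univ := by
    simp [cons_mem_recVerts_iff, nil_mem_recVerts]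
  exact ⟨nil_mem_recVerts, children_eq_univ ▸ infinite_univ⟩

theorem eq_zero_of_cons_append_mem_recVerts {a m : ℕ} {r : List ℕ}
    (h : a :: r ++ [m] ∈ RecVerts) (ha : r.length < a) : m = 0 := by
  rw [List.cons_append, cons_mem_recVerts_iff] at h
  exact h.1 m (by rw [List.take_of_length_le (by simpa using ha)]; simp)

theorem cons_mem_infDegVerts_iff {a : ℕ} {r : List ℕ} :
    a :: r ∈ InfDegVerts ↔ List.replicate a 0 <+: r ∧ r ∈ InfDegVerts := by
  simp only [InfDegVerts, mem_ofPred_eq, replicate_prefix_iff_forall_mem_take,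
    cons_mem_recVerts_iff]
  constructor
  · rintro ⟨⟨hzero, hr⟩, hinf⟩
    refine ⟨⟨?_, hzero⟩, hr, hinf.mono fun m hm ↦ (cons_mem_recVerts_iff.1 hm).2⟩
    by_contra! hlt
    exact hinf ((finite_singleton 0).subset fun m hm ↦ eq_zero_of_cons_append_mem_recVerts hm hlt)
  · rintro ⟨⟨hle, hzero⟩, hr, hinf⟩
    refine ⟨⟨hzero, hr⟩, hinf.mono fun m hm ↦ cons_mem_recVerts_iff.2 ⟨?_, hm⟩⟩
    rwa [List.append_eq, List.take_append_of_le_length hle]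

/-- The straight segment `m, 0, …, 0` of `T^(rec)`: an entry `m` together with the `m` zeros that it
forces. It consists of `m + 1` vertices. -/
def straightSegment (m : ℕ) : List ℕ :=
  m :: List.replicate m 0

theorem straightSegment_append_mem_infDegVerts_iff {m : ℕ} {l : List ℕ} :
    straightSegment m ++ l ∈ InfDegVerts ↔ l ∈ InfDegVerts := by
  have replicate_append (k : ℕ) : List.replicate k 0 ++ l ∈ InfDegVerts ↔ l ∈ InfDegVerts := by
    induction k with
    | zero => simp
    | succ k ih => simp [List.replicate_succ, cons_mem_infDegVerts_iff, ih]
  simp [straightSegment, cons_mem_infDegVerts_iff, replicate_append]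

/-- The concatenation of the straight segments that start with the entries of a given list. -/
def concatSegments (ms : List ℕ) : List ℕ :=
  ms.flatMap straightSegment

theorem concatSegments_cons (m : ℕ) (ms : List ℕ) :
    concatSegments (m :: ms) = straightSegment m ++ concatSegments ms :=
  rfl

theorem length_concatSegments (ms : List ℕ) :
    (concatSegments ms).length = (ms.map (· + 1)).sum := by
  simp [concatSegments, straightSegment, List.length_flatMap]

theorem concatSegments_injective : Function.Injective concatSegments := by
  intro ms
  induction ms with
  | nil => rintro (_ | _) h <;> simp_all [concatSegments, straightSegment]
  | cons m ms ih =>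
    rintro (_ | ⟨k, ks⟩) h
    · simp [concatSegments, straightSegment] at h
    · simp only [concatSegments_cons] at h
      obtain rfl : m = k := (List.cons.inj h).1
      rw [ih (List.append_cancel_left h)]

theorem range_concatSegments : range concatSegments = InfDegVerts := by
  apply Subset.antisymm
  · rintro _ ⟨ms, rfl⟩
    induction ms with
    | nil => exact nil_mem_infDegVerts
    | cons m ms ih => rwa [concatSegments_cons, straightSegment_append_mem_infDegVerts_iff]
  · intro l hl
    induction hlen : l.length using Nat.strong_induction_on generalizing l with | _ n ih
    obtain _ | ⟨m, r⟩ := l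
    · exact ⟨[], rfl⟩
    · obtain ⟨l', rfl⟩ := (cons_mem_infDegVerts_iff.1 hl).1
      have hl' : l' ∈ InfDegVerts := straightSegment_append_mem_infDegVerts_iff.1 hl
      obtain ⟨ms, rfl⟩ := ih l'.length (by grind) hl' rfl
      exact ⟨m :: ms, rfl⟩

theorem map_succ_map_pred_blocks {n : ℕ} (c : Composition n) :
    (c.blocks.map (· - 1)).map (· + 1) = c.blocks := by
  rw [List.map_map]
  exact (List.map_congr_left fun b hb ↦ Nat.sub_add_cancel (c.blocks_pos hb)).trans
    (List.map_id' c.blocks)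

/-- Compositions of `n` as lists of naturals, each block `b` being recorded as `b - 1` so that no
positivity condition is left. -/
def compositionEquivPredBlocks (n : ℕ) :
    Composition n ≃ {ms : List ℕ // (ms.map (· + 1)).sum = n} where
  toFun c := ⟨c.blocks.map (· - 1), by rw [map_succ_map_pred_blocks, c.blocks_sum]⟩
  invFun ms := ⟨ms.1.map (· + 1), by simp, ms.2⟩
  left_inv c := Composition.ext (map_succ_map_pred_blocks c)
  right_inv ms := Subtype.ext <| by simp [Function.comp_def]

theorem ncard_sum_map_succ_eq (n : ℕ) :
    {ms : List ℕ | (ms.map (· + 1)).sum = n}.ncard = 2 ^ (n - 1) := by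
  rw [← Nat.card_coe_set_eq, ← composition_card n, ← Nat.card_eq_fintype_card]
  exact (Nat.card_congr (compositionEquivPredBlocks n)).symm

/-- for every `n ≥ 1`, level `n` of the recursive rooted tree
`T^(rec)` contains exactly `2 ^ (n - 1)` vertices of infinite degree, i.e.
vertices with infinitely many children (one-element extensions lying in the
tree). -/
theorem stmt15 (n : ℕ) (hn : 1 ≤ n) :
    {l : List ℕ | l ∈ RecVerts ∧ l.length = n ∧
        {m : ℕ | l ++ [m] ∈ RecVerts}.Infinite}.ncard = 2 ^ (n - 1) := by
  have level_eq_image : {l : List ℕ | l ∈ RecVerts ∧ l.length = n ∧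
      {m : ℕ | l ++ [m] ∈ RecVerts}.Infinite} =
      concatSegments '' {ms | (ms.map (· + 1)).sum = n} := by
    simp only [← length_concatSegments]
    rw [← preimage_ofPred_eq (p := fun l : List ℕ ↦ l.length = n), image_preimage_eq_inter_range,
      range_concatSegments]
    ext l
    simp only [InfDegVerts, mem_inter_iff, mem_ofPred_eq]
    tauto
  rw [level_eq_image, ncard_image_of_injective _ concatSegments_injective, ncard_sum_map_succ_eq]
end
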